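/- arXiv:1909.09707 — 7 statements merged into one kernel-verified Lean document; each statement's English description precedes it below -/
import Mathlib

section
/- Let k ≥ 1 be an integer and c : Fin k → ℝ with c i > 0 for all i. The circle group Circle acts on the orbit space O of the snake linkage by pointwise multiplication, u • A = (fun j => u · A j), and this action maps O to itself. The quotient topological space of O by the orbit equivalence relation of this action is homeomorphic to the (k−1)-torus Fin (k−1) → Circle. -/
/-- The orbit space of the snake linkage: placements of the vertices
`A 0, …, A k` in the plane `ℂ` with `A 0 = 0` and prescribed bar lengths. -/
def snakeOrbitSpace (k : ℕ) (c : Fin k → ℝ) : Set (Fin (k + 1) → ℂ) :=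
  {A | A 0 = 0 ∧ ∀ i : Fin k, ‖A i.succ - A i.castSucc‖ = c i}

/-- The orbit equivalence relation of the rotation action of `Circle` on the
orbit space of the snake linkage (pointwise multiplication). -/
def snakeRotSetoid (k : ℕ) (c : Fin k → ℝ) : Setoid (snakeOrbitSpace k c) where
  r := fun A B => ∃ u : Circle, (fun j => (u : ℂ) * (A : Fin (k + 1) → ℂ) j) = (B : Fin (k + 1) → ℂ)
  iseqv := by
    constructor
    · intro A
      exact ⟨1, by simp⟩
    · rintro A B ⟨u, hu⟩
      refine ⟨u⁻¹, ?_⟩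
      funext j
      have h := congrFun hu j
      change (u : ℂ) * (A : Fin (k + 1) → ℂ) j = (B : Fin (k + 1) → ℂ) j at h
      change ((u⁻¹ : Circle) : ℂ) * (B : Fin (k + 1) → ℂ) j = (A : Fin (k + 1) → ℂ) j
      rw [← h, Circle.coe_inv, ← mul_assoc, inv_mul_cancel₀ (Circle.coe_ne_zero u), one_mul]
    · rintro A B C ⟨u, hu⟩ ⟨v, hv⟩
      refine ⟨v * u, ?_⟩
      funext j
      have h1 := congrFun hu j
      have h2 := congrFun hv j
      change (u : ℂ) * (A : Fin (k + 1) → ℂ) j = (B : Fin (k + 1) → ℂ) j at h1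
      change (v : ℂ) * (B : Fin (k + 1) → ℂ) j = (C : Fin (k + 1) → ℂ) j at h2
      change ((v * u : Circle) : ℂ) * (A : Fin (k + 1) → ℂ) j = (C : Fin (k + 1) → ℂ) j
      rw [Circle.coe_mul, ← h2, ← h1]
      ring

/-!
A placement of the snake is determined by the unit directions `s 0, …, s (k - 1)` of its bars, and
a rotation `u` of the snake replaces every `s i` by `u * s i`. The complete invariant of such a
simultaneous rotation is the family of the `k - 1` turns `(s i)⁻¹ * s (i + 1)` at the inner joints,
and these can be prescribed freely: partial products of the turns give a continuous section.
-/

open Topology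

section SuccessiveRatios

variable {G : Type*} [Group G] {n : ℕ}

/-- The ratios `(g i)⁻¹ * g (i + 1)` of neighbouring terms of a finite sequence in a group; the
additive version is the sequence of differences, written `-g i + g (i + 1)`. The inverse is on the
left to make the ratios invariant under left multiplication, as `Fin.partialProd_left_inv` does. -/
@[to_additive successiveDifferences]
def successiveRatios (g : Fin (n + 1) → G) (i : Fin n) : G :=
  (g i.castSucc)⁻¹ * g i.succ

@[to_additive successiveDifferences_partialSum]
theorem successiveRatios_partialProd (t : Fin n → G) :
    successiveRatios (Fin.partialProd t) = t :=
  funext (Fin.partialProd_right_inv t)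

@[to_additive vadd_partialSum_successiveDifferences]
theorem smul_partialProd_successiveRatios (g : Fin (n + 1) → G) :
    g 0 • Fin.partialProd (successiveRatios g) = g :=
  Fin.partialProd_left_inv g

theorem partialSum_successiveDifferences {V : Type*} [AddGroup V] {f : Fin (n + 1) → V}
    (hf : f 0 = 0) : Fin.partialSum (successiveDifferences f) = f := by
  simpa only [hf, zero_vadd] using vadd_partialSum_successiveDifferences f

theorem successiveRatios_smul (u : G) (g : Fin (n + 1) → G) :
    successiveRatios (u • g) = successiveRatios g := by
  funext i
  simp [successiveRatios, mul_assoc]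

theorem successiveDifferences_smul {R V : Type*} [AddGroup V] [DistribSMul R V] (r : R)
    (f : Fin (n + 1) → V) : successiveDifferences (r • f) = r • successiveDifferences f := by
  funext i
  simp only [successiveDifferences, Pi.smul_apply, smul_add, smul_neg]

theorem orbitRel_eq_ker_successiveRatios :
    MulAction.orbitRel G (Fin (n + 1) → G) = Setoid.ker successiveRatios := by
  ext g h
  rw [MulAction.orbitRel_apply, Setoid.ker_def]
  constructor
  · rintro ⟨u, rfl⟩
    exact successiveRatios_smul u h
  · intro hgh
    refine ⟨g 0 * (h 0)⁻¹, ?_⟩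
    calc (g 0 * (h 0)⁻¹) • h
        = (g 0 * (h 0)⁻¹) • h 0 • Fin.partialProd (successiveRatios h) := by
          rw [smul_partialProd_successiveRatios]
      _ = g 0 • Fin.partialProd (successiveRatios g) := by
          rw [smul_smul, inv_mul_cancel_right, hgh]
      _ = g := smul_partialProd_successiveRatios g

@[to_additive]
theorem continuous_partialProd {M : Type*} [Monoid M] [TopologicalSpace M] [ContinuousMul M] :
    Continuous (Fin.partialProd : (Fin n → M) → Fin (n + 1) → M) := by
  refine continuous_pi fun j => ?_
  induction j using Fin.induction with
  | zero => simpa only [Fin.partialProd_zero] using continuous_const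
  | succ i ih =>
    simp only [Fin.partialProd_succ]
    exact ih.mul (continuous_apply i)

@[to_additive continuous_successiveDifferences]
theorem continuous_successiveRatios [TopologicalSpace G] [IsTopologicalGroup G] :
    Continuous (successiveRatios : (Fin (n + 1) → G) → Fin n → G) := by
  unfold successiveRatios
  fun_prop

theorem isQuotientMap_successiveRatios [TopologicalSpace G] [IsTopologicalGroup G] :
    IsQuotientMap (successiveRatios : (Fin (n + 1) → G) → Fin n → G) :=
  .of_inverse continuous_partialProd continuous_successiveRatios successiveRatios_partialProd

end SuccessiveRatios

section Snake

variable {k : ℕ} {c : Fin k → ℝ}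

theorem mem_snakeOrbitSpace_iff {A : Fin (k + 1) → ℂ} :
    A ∈ snakeOrbitSpace k c ↔ A 0 = 0 ∧ ∀ i, ‖successiveDifferences A i‖ = c i := by
  simp only [snakeOrbitSpace, Set.mem_ofPred_eq, successiveDifferences, neg_add_eq_sub]

theorem smul_mem_snakeOrbitSpace (u : Circle) {A : Fin (k + 1) → ℂ}
    (hA : A ∈ snakeOrbitSpace k c) : (u : ℂ) • A ∈ snakeOrbitSpace k c := by
  rw [mem_snakeOrbitSpace_iff] at hA ⊢
  refine ⟨by rw [Pi.smul_apply, hA.1, smul_zero], fun i => ?_⟩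
  rw [successiveDifferences_smul, Pi.smul_apply, norm_smul, Circle.norm_coe, one_mul, hA.2 i]

theorem partialSum_mul_circle_mem_snakeOrbitSpace (hc : ∀ i, 0 ≤ c i) (s : Fin k → Circle) :
    Fin.partialSum (fun i => (c i : ℂ) * s i) ∈ snakeOrbitSpace k c := by
  refine mem_snakeOrbitSpace_iff.2 ⟨Fin.partialSum_zero _, fun i => ?_⟩
  rw [successiveDifferences_partialSum, norm_mul, Circle.norm_coe, mul_one,
    Complex.norm_of_nonneg (hc i)]

theorem successiveDifferences_div_mem_unitSphere (hc : ∀ i, 0 < c i) {A : Fin (k + 1) → ℂ}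
    (hA : A ∈ snakeOrbitSpace k c) (i : Fin k) :
    successiveDifferences A i / (c i : ℂ) ∈ Submonoid.unitSphere ℂ := by
  refine mem_sphere_zero_iff_norm.2 ?_
  rw [norm_div, (mem_snakeOrbitSpace_iff.1 hA).2 i, Complex.norm_of_nonneg (hc i).le,
    div_self (hc i).ne']

/-- The identification of the orbit space of the snake with a torus: a placement corresponds to the
unit directions of its bars, and directions `s` are realized by placing the vertices at the partial
sums of the vectors `c i * s i`. -/
noncomputable def barDirections (hc : ∀ i, 0 < c i) :
    snakeOrbitSpace k c ≃ₜ (Fin k → Circle) where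
  toFun A i := ⟨successiveDifferences A.1 i / (c i : ℂ),
    successiveDifferences_div_mem_unitSphere hc A.2 i⟩
  invFun s := ⟨Fin.partialSum fun i => (c i : ℂ) * s i,
    partialSum_mul_circle_mem_snakeOrbitSpace (fun i => (hc i).le) s⟩
  left_inv A := by
    have c_ne_zero (i : Fin k) : (c i : ℂ) ≠ 0 := Complex.ofReal_ne_zero.2 (hc i).ne'
    refine Subtype.ext ?_
    simp only [mul_div_cancel₀ _ (c_ne_zero _)]
    exact partialSum_successiveDifferences A.2.1
  right_inv s := by
    funext i
    refine Circle.ext ?_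
    simp only [successiveDifferences_partialSum]
    exact mul_div_cancel_left₀ _ (Complex.ofReal_ne_zero.2 (hc i).ne')
  continuous_toFun := by
    have continuous_bars : Continuous fun A : snakeOrbitSpace k c => successiveDifferences A.1 :=
      continuous_successiveDifferences.comp continuous_subtype_val
    exact continuous_pi fun i =>
      .subtype_mk (((continuous_apply i).comp continuous_bars).div_const _) _
  continuous_invFun := .subtype_mk (continuous_partialSum.comp (by fun_prop)) _

theorem coe_barDirections (hc : ∀ i, 0 < c i) (A : snakeOrbitSpace k c) (i : Fin k) :
    (barDirections hc A i : ℂ) = successiveDifferences A.1 i / (c i : ℂ) :=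
  rfl

theorem barDirections_smul (hc : ∀ i, 0 < c i) (u : Circle) (A : snakeOrbitSpace k c) :
    barDirections hc ⟨(u : ℂ) • A.1, smul_mem_snakeOrbitSpace u A.2⟩ = u • barDirections hc A := by
  funext i
  refine Circle.ext ?_
  simp only [coe_barDirections, successiveDifferences_smul, Pi.smul_apply, smul_eq_mul,
    Circle.coe_mul, mul_div_assoc]

theorem snakeRotSetoid_eq_comap_orbitRel (hc : ∀ i, 0 < c i) :
    snakeRotSetoid k c =
      (MulAction.orbitRel Circle (Fin k → Circle)).comap (barDirections hc) := by
  ext A B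
  change _ ↔ MulAction.orbitRel Circle _ (barDirections hc A) (barDirections hc B)
  rw [Setoid.comm' (MulAction.orbitRel _ _), MulAction.orbitRel_apply]
  refine exists_congr fun u => ?_
  calc (u : ℂ) • A.1 = B.1
      ↔ (⟨(u : ℂ) • A.1, smul_mem_snakeOrbitSpace u A.2⟩ : snakeOrbitSpace k c) = B := by
        rw [Subtype.ext_iff]
    _ ↔ u • barDirections hc A = barDirections hc B := by
        rw [← barDirections_smul, (barDirections hc).injective.eq_iff]

end Snake

theorem snake_configuration_space_is_torus (k : ℕ) (hk : 1 ≤ k)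
    (c : Fin k → ℝ) (hc : ∀ i, 0 < c i) :
    (∀ (u : Circle) (A : Fin (k + 1) → ℂ), A ∈ snakeOrbitSpace k c →
      (fun j => (u : ℂ) * A j) ∈ snakeOrbitSpace k c) ∧
    Nonempty (Quotient (snakeRotSetoid k c) ≃ₜ (Fin (k - 1) → Circle)) := by
  refine ⟨fun u A hA => smul_mem_snakeOrbitSpace u hA, ?_⟩
  obtain ⟨n, rfl⟩ := Nat.exists_eq_add_of_le' hk
  let turns : snakeOrbitSpace (n + 1) c → Fin n → Circle := successiveRatios ∘ barDirections hc
  have turns_isQuotientMap : IsQuotientMap turns :=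
    isQuotientMap_successiveRatios.comp (barDirections hc).isQuotientMap
  have rot_eq_ker_turns : snakeRotSetoid (n + 1) c = Setoid.ker turns := by
    rw [snakeRotSetoid_eq_comap_orbitRel hc, orbitRel_eq_ker_successiveRatios]
    rfl
  rw [rot_eq_ker_turns]
  exact ⟨IsQuotientMap.homeomorph (f := ⟨turns, turns_isQuotientMap.continuous⟩)
    turns_isQuotientMap⟩
end

section
/- (Maximal value of the diagonal on the hexagon configuration space.) Let ℓ : Fin 6 → ℝ satisfy 0 < ℓ i for all i, ℓ 0 ≤ ℓ 1 ≤ ℓ 2 ≤ ℓ 3 ≤ ℓ 4 ≤ ℓ 5, and ℓ 5 ≤ ℓ 0 + ℓ 1 + ℓ 2 + ℓ 3 + ℓ 4. Then the set {d : ℝ | there exists a hexagon realization A with side lengths ℓ and dist (A 0) (A 3) = d} has greatest element ℓ 0 + ℓ 1 + ℓ 2; that is, every realization satisfies dist (A 0) (A 3) ≤ ℓ 0 + ℓ 1 + ℓ 2, and this value is attained by some realization. -/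
/-- A hexagon realization in the plane `ℂ` with side lengths `ℓ`. -/
def IsHexagonRealization (ℓ : Fin 6 → ℝ) (A : Fin 6 → ℂ) : Prop :=
  ∀ i : Fin 6, dist (A i) (A (i + 1)) = ℓ i

/-!
The triangle inequality bounds `dist (A 0) (A 3)` by `ℓ 0 + ℓ 1 + ℓ 2`. To attain this value, fix
two points at that distance: each half of the hexagon is a path of three edges joining them, and
such a path exists as soon as none of the four lengths involved exceeds the sum of the other three.
It consists of two triangles glued along a diagonal, and the third vertex of a triangle is found by
the intermediate value theorem: the distance to `Q` varies continuously along the connected sphere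
of radius `a` around `P`, from `|dist P Q - a|` to `dist P Q + a`.
-/

section NormedSpace

variable {E : Type*} [NormedAddCommGroup E] [NormedSpace ℝ E]

theorem exists_norm_eq_one_and_eq_norm_smul [Nontrivial E] (v : E) :
    ∃ u : E, ‖u‖ = 1 ∧ v = ‖v‖ • u := by
  rcases eq_or_ne v 0 with rfl | hv
  · obtain ⟨u, hu⟩ := exists_norm_eq E zero_le_one
    exact ⟨u, hu, by simp⟩
  · exact ⟨‖v‖⁻¹ • v, by simp [norm_smul, hv], (smul_inv_smul₀ (norm_ne_zero_iff.2 hv) v).symm⟩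

theorem exists_dist_eq_and_dist_eq (hE : 1 < Module.rank ℝ E) {P Q : E} {a b : ℝ}
    (hab : |dist P Q - a| ≤ b) (hba : b ≤ dist P Q + a) :
    ∃ R : E, dist P R = a ∧ dist R Q = b := by
  have ha : 0 ≤ a := by linarith [(abs_le.1 hab).2]
  have : Nontrivial E := rank_pos_iff_nontrivial.1 (zero_lt_one.trans hE)
  obtain ⟨u, hu, hPQ⟩ := exists_norm_eq_one_and_eq_norm_smul (Q - P)
  rw [← dist_eq_norm, dist_comm] at hPQ
  have dist_line (t : ℝ) : dist (P + t • u) Q = |t - dist P Q| := by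
    rw [dist_eq_norm, ← sub_sub_sub_cancel_right _ Q P, hPQ, add_sub_cancel_left, ← sub_smul,
      norm_smul, hu, mul_one, Real.norm_eq_abs]
  have mem_sphere_line {t : ℝ} (ht : |t| = a) : P + t • u ∈ Metric.sphere P a := by
    simp [norm_smul, hu, ht]
  have near : dist (P + a • u) Q = |dist P Q - a| := by rw [dist_line, abs_sub_comm]
  have far : dist (P + (-a) • u) Q = dist P Q + a := by
    rw [dist_line, abs_sub_comm, sub_neg_eq_add, abs_of_nonneg (by positivity)]
  obtain ⟨R, hR, hRQ⟩ := (isPreconnected_sphere hE P a).intermediate_value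
    (mem_sphere_line (abs_of_nonneg ha)) (mem_sphere_line (by rw [abs_neg, abs_of_nonneg ha]))
    (f := (dist · Q)) (by fun_prop) ⟨near.trans_le hab, hba.trans_eq far.symm⟩
  exact ⟨R, Metric.mem_sphere'.1 hR, hRQ⟩

theorem exists_dist_eq_and_dist_eq_and_dist_eq (hE : 1 < Module.rank ℝ E) {P Q : E} {a b c : ℝ}
    (ha : 0 ≤ a) (hb : 0 ≤ b) (hc : 0 ≤ c) (hPQ : dist P Q ≤ a + b + c)
    (habc : a ≤ dist P Q + b + c) (hbac : b ≤ dist P Q + a + c) (hcab : c ≤ dist P Q + a + b) :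
    ∃ R S : E, dist P R = a ∧ dist R S = b ∧ dist S Q = c := by
  -- `r` will be `dist R Q`. The triangles `PRQ` and `RSQ` each confine it to an interval, and the
  -- four inequalities between the lengths say that the two intervals meet.
  obtain ⟨r, hPRQ, hRSQ, hr, hr'⟩ :
      ∃ r, |dist P Q - a| ≤ r ∧ |b - c| ≤ r ∧ r ≤ dist P Q + a ∧ r ≤ b + c := by
    refine ⟨max |dist P Q - a| |b - c|, le_max_left .., le_max_right .., ?_, ?_⟩ <;>
      refine max_le (abs_le.2 ⟨?_, ?_⟩) (abs_le.2 ⟨?_, ?_⟩) <;>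
      linarith [dist_nonneg (x := P) (y := Q)]
  obtain ⟨R, hPR, hRQ⟩ := exists_dist_eq_and_dist_eq hE hPRQ hr
  rw [abs_le] at hRSQ
  obtain ⟨S, hRS, hSQ⟩ := exists_dist_eq_and_dist_eq hE (P := R) (Q := Q)
    (abs_le.2 ⟨by linarith, by linarith⟩) (show c ≤ dist R Q + b by linarith)
  exact ⟨R, S, hPR, hRS, hSQ⟩

theorem hexagon_diagonal_max_general (hE : 1 < Module.rank ℝ E) (ℓ : Fin 6 → ℝ)
    (hℓ : ∀ i, 0 ≤ ℓ i) (h012 : ℓ 0 + ℓ 1 + ℓ 2 ≤ ℓ 3 + ℓ 4 + ℓ 5)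
    (h3 : ℓ 3 ≤ ℓ 0 + ℓ 1 + ℓ 2 + ℓ 4 + ℓ 5) (h4 : ℓ 4 ≤ ℓ 0 + ℓ 1 + ℓ 2 + ℓ 3 + ℓ 5)
    (h5 : ℓ 5 ≤ ℓ 0 + ℓ 1 + ℓ 2 + ℓ 3 + ℓ 4) :
    IsGreatest {d : ℝ | ∃ A : Fin 6 → E,
        (∀ i, dist (A i) (A (i + 1)) = ℓ i) ∧ dist (A 0) (A 3) = d}
      (ℓ 0 + ℓ 1 + ℓ 2) := by
  have : Nontrivial E := rank_pos_iff_nontrivial.1 (zero_lt_one.trans hE)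
  have hℓ0 := hℓ 0
  have hℓ1 := hℓ 1
  have hℓ2 := hℓ 2
  constructor
  · obtain ⟨Q, hQ⟩ := exists_norm_eq E (show 0 ≤ ℓ 0 + ℓ 1 + ℓ 2 by positivity)
    rw [← dist_zero_left] at hQ
    obtain ⟨A₁, A₂, h01, h12, h23⟩ := exists_dist_eq_and_dist_eq_and_dist_eq hE (P := 0) (Q := Q)
      (hℓ 0) (hℓ 1) (hℓ 2) hQ.le (by linarith) (by linarith) (by linarith)
    rw [dist_comm] at hQ
    obtain ⟨A₄, A₅, h34, h45, h50⟩ := exists_dist_eq_and_dist_eq_and_dist_eq hE (P := Q) (Q := 0)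
      (hℓ 3) (hℓ 4) (hℓ 5) (by linarith) (by linarith) (by linarith) (by linarith)
    refine ⟨![0, A₁, A₂, Q, A₄, A₅], fun i ↦ ?_, (dist_comm ..).trans hQ⟩
    fin_cases i
    exacts [h01, h12, h23, h34, h45, h50]
  · rintro _ ⟨A, hA, rfl⟩
    exact (dist_triangle4 (A 0) (A 1) (A 2) (A 3)).trans
      (add_le_add_three (hA 0).le (hA 1).le (hA 2).le)

end NormedSpace

/-- The maximal value of the diagonal `|A₀A₃|` on the configuration space of a
hexagon with ordered side lengths is `ℓ 0 + ℓ 1 + ℓ 2`. -/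
theorem hexagon_diagonal_max (ℓ : Fin 6 → ℝ) (hpos : ∀ i, 0 < ℓ i)
    (h01 : ℓ 0 ≤ ℓ 1) (h12 : ℓ 1 ≤ ℓ 2) (h23 : ℓ 2 ≤ ℓ 3)
    (h34 : ℓ 3 ≤ ℓ 4) (h45 : ℓ 4 ≤ ℓ 5)
    (hne : ℓ 5 ≤ ℓ 0 + ℓ 1 + ℓ 2 + ℓ 3 + ℓ 4) :
    IsGreatest {d : ℝ | ∃ A : Fin 6 → ℂ,
        IsHexagonRealization ℓ A ∧ dist (A 0) (A 3) = d}
      (ℓ 0 + ℓ 1 + ℓ 2) := by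
  have h0 := hpos 0
  exact hexagon_diagonal_max_general (by simp [Complex.rank_real_complex]) ℓ (fun i ↦ (hpos i).le)
    (by linarith) (by linarith) (by linarith) hne
end

section
/- (Minimal value of the diagonal on the hexagon configuration space.) Let ℓ : Fin 6 → ℝ satisfy 0 < ℓ i for all i, ℓ 0 ≤ ℓ 1 ≤ ℓ 2 ≤ ℓ 3 ≤ ℓ 4 ≤ ℓ 5, and ℓ 5 ≤ ℓ 0 + ℓ 1 + ℓ 2 + ℓ 3 + ℓ 4. Then the set {d : ℝ | there exists a hexagon realization A with side lengths ℓ and dist (A 0) (A 3) = d} has least element max(0, max(ℓ 2 − ℓ 1 − ℓ 0, ℓ 5 − ℓ 4 − ℓ 3)); that is, every realization satisfies dist (A 0) (A 3) ≥ max(0, ℓ 2 − ℓ 1 − ℓ 0, ℓ 5 − ℓ 4 − ℓ 3), and this value is attained by some realization. -/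
/-!
The diagonal `A₀A₃` cuts the hexagon into two paths of three edges with common endpoints. Each path
bounds the diagonal below and above by the triangle inequality. Conversely, two points can be
joined by a path with prescribed edge lengths as soon as none of these lengths and the distance
between the endpoints exceeds the sum of the others, so every diagonal within the bounds occurs.
Such paths are glued from triangles, and a triangle is found by the intermediate value theorem: on
a sphere around `u`, which is connected in dimension at least two, the distance to `v` takes all
values between those at the two points where a line through `u` and `v` meets the sphere.
-/

theorem dist_sub_dist_sub_dist_le {X : Type*} [PseudoMetricSpace X] (u p q v : X) :
    dist q v - dist p q - dist u p ≤ dist u v := by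
  have h := dist_triangle4 q p u v
  rw [dist_comm q p, dist_comm p u] at h
  linarith

section NormedSpace

variable {E : Type*} [NormedAddCommGroup E] [NormedSpace ℝ E]

theorem exists_norm_eq_one_and_norm_smul_eq [Nontrivial E] (x : E) :
    ∃ e : E, ‖e‖ = 1 ∧ ‖x‖ • e = x := by
  rcases eq_or_ne x 0 with rfl | hx
  · obtain ⟨e, he⟩ := exists_norm_eq E zero_le_one
    exact ⟨e, he, by simp⟩
  · exact ⟨‖x‖⁻¹ • x, norm_smul_inv_norm (𝕜 := ℝ) hx, smul_inv_smul₀ (norm_ne_zero_iff.mpr hx) x⟩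

theorem exists_dist_eq_dist_eq (hE : 1 < Module.rank ℝ E) {u v : E} {a b : ℝ}
    (hsub : |a - b| ≤ dist u v) (hadd : dist u v ≤ a + b) :
    ∃ p : E, dist u p = a ∧ dist p v = b := by
  have : Nontrivial E := rank_pos_iff_nontrivial.mp (zero_lt_one.trans hE)
  have ha : 0 ≤ a := by linarith [neg_abs_le (a - b)]
  obtain ⟨e, he, hev⟩ := exists_norm_eq_one_and_norm_smul_eq (v - u)
  rw [← dist_eq_norm', eq_sub_iff_add_eq'] at hev
  set d := dist u v
  have hline (t : ℝ) : dist (u + t • e) v = |t - d| := by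
    rw [← hev, dist_add_left, dist_eq_norm, ← sub_smul, norm_smul, he, mul_one, Real.norm_eq_abs]
  have hmem {t : ℝ} (ht : |t| = a) : u + t • e ∈ Metric.sphere u a := by
    simp [norm_smul, he, ht]
  have hnear : dist (u + a • e) v ≤ b := by
    rw [hline, abs_le]
    constructor <;> linarith [abs_le.mp hsub]
  have hfar : b ≤ dist (u + (-a) • e) v := by
    rw [hline, le_abs]
    right
    linarith [neg_abs_le (a - b)]
  obtain ⟨p, hp, hpv⟩ := (isPreconnected_sphere hE u a).intermediate_value
    (hmem (abs_of_nonneg ha)) (hmem (by rw [abs_neg, abs_of_nonneg ha]))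
    (continuous_id.dist continuous_const).continuousOn ⟨hnear, hfar⟩
  exact ⟨p, Metric.mem_sphere'.mp hp, hpv⟩

theorem exists_dist_eq_dist_eq_dist_eq (hE : 1 < Module.rank ℝ E) {u v : E} {a b c : ℝ}
    (ha : 0 ≤ a) (hb : 0 ≤ b) (hc : 0 ≤ c) (hau : a ≤ b + c + dist u v)
    (hbu : b ≤ a + c + dist u v) (hcu : c ≤ a + b + dist u v) (huv : dist u v ≤ a + b + c) :
    ∃ p q : E, dist u p = a ∧ dist p q = b ∧ dist q v = c := by
  have hd : 0 ≤ dist u v := dist_nonneg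
  -- `x` will be the length of the diagonal `u q`: it has to fit into both `u p q` and `u q v`.
  obtain ⟨x, hab, hcd, hx_ab, hx_cd⟩ :
      ∃ x, |a - b| ≤ x ∧ |c - dist u v| ≤ x ∧ x ≤ a + b ∧ x ≤ c + dist u v := by
    refine ⟨max |a - b| |c - dist u v|, le_max_left _ _, le_max_right _ _, ?_, ?_⟩ <;>
      simp only [max_le_iff, abs_le] <;>
      refine ⟨⟨?_, ?_⟩, ?_, ?_⟩ <;> linarith
  have hxc : |x - c| ≤ dist u v := by
    rw [abs_le]
    constructor <;> linarith [abs_le.mp hcd]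
  obtain ⟨q, rfl, hqv⟩ := exists_dist_eq_dist_eq hE hxc (by linarith [abs_le.mp hcd])
  obtain ⟨p, hup, hpq⟩ := exists_dist_eq_dist_eq hE hab hx_ab
  exact ⟨p, q, hup, hpq, hqv⟩

theorem setOf_hexagon_diagonal_eq_Icc (hE : 1 < Module.rank ℝ E) (ℓ : Fin 6 → ℝ)
    (hℓ : ∀ i, 0 ≤ ℓ i) (h02 : ℓ 0 ≤ ℓ 2) (h12 : ℓ 1 ≤ ℓ 2) (h35 : ℓ 3 ≤ ℓ 5) (h45 : ℓ 4 ≤ ℓ 5) :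
    {d : ℝ | ∃ A : Fin 6 → E,
        (∀ i : Fin 6, dist (A i) (A (i + 1)) = ℓ i) ∧ dist (A 0) (A 3) = d} =
      Set.Icc (max 0 (max (ℓ 2 - ℓ 1 - ℓ 0) (ℓ 5 - ℓ 4 - ℓ 3)))
        (min (ℓ 0 + ℓ 1 + ℓ 2) (ℓ 3 + ℓ 4 + ℓ 5)) := by
  ext d
  simp only [Set.mem_ofPred_eq, Set.mem_Icc, max_le_iff, le_min_iff]
  constructor
  · rintro ⟨A, hA, rfl⟩
    have hge₂ := dist_sub_dist_sub_dist_le (A 0) (A 1) (A 2) (A 3)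
    have hge₅ := dist_sub_dist_sub_dist_le (A 3) (A 4) (A 5) (A 0)
    have hle₀₁₂ := dist_triangle4 (A 0) (A 1) (A 2) (A 3)
    have hle₃₄₅ := dist_triangle4 (A 3) (A 4) (A 5) (A 0)
    rw [dist_comm (A 3) (A 0)] at hge₅ hle₃₄₅
    rw [← hA 0, ← hA 1, ← hA 2, ← hA 3, ← hA 4, ← hA 5]
    exact ⟨⟨dist_nonneg, hge₂, hge₅⟩, hle₀₁₂, hle₃₄₅⟩
  · rintro ⟨⟨hd, hd₂, hd₅⟩, hd₀₁₂, hd₃₄₅⟩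
    have : Nontrivial E := rank_pos_iff_nontrivial.mp (zero_lt_one.trans hE)
    obtain ⟨v, rfl⟩ := exists_norm_eq E hd
    rw [← dist_zero_left] at hd₂ hd₅ hd₀₁₂ hd₃₄₅ ⊢
    obtain ⟨p, q, hup, hpq, hqv⟩ := exists_dist_eq_dist_eq_dist_eq hE (hℓ 0) (hℓ 1) (hℓ 2)
      (by linarith [hℓ 1]) (by linarith [hℓ 0]) (by linarith) hd₀₁₂
    rw [dist_comm] at hd₅ hd₃₄₅
    obtain ⟨r, s, hvr, hrs, hsu⟩ := exists_dist_eq_dist_eq_dist_eq hE (hℓ 3) (hℓ 4) (hℓ 5)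
      (by linarith [hℓ 4]) (by linarith [hℓ 3]) (by linarith) hd₃₄₅
    refine ⟨![0, p, q, v, r, s], fun i => ?_, rfl⟩
    fin_cases i <;> assumption

theorem hexagon_diagonal_min_general (hE : 1 < Module.rank ℝ E) (ℓ : Fin 6 → ℝ)
    (hℓ : ∀ i, 0 ≤ ℓ i) (h02 : ℓ 0 ≤ ℓ 2) (h12 : ℓ 1 ≤ ℓ 2) (h35 : ℓ 3 ≤ ℓ 5) (h45 : ℓ 4 ≤ ℓ 5)
    (h2 : ℓ 2 ≤ ℓ 0 + ℓ 1 + ℓ 3 + ℓ 4 + ℓ 5) (h5 : ℓ 5 ≤ ℓ 0 + ℓ 1 + ℓ 2 + ℓ 3 + ℓ 4) :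
    IsLeast {d : ℝ | ∃ A : Fin 6 → E,
        (∀ i : Fin 6, dist (A i) (A (i + 1)) = ℓ i) ∧ dist (A 0) (A 3) = d}
      (max 0 (max (ℓ 2 - ℓ 1 - ℓ 0) (ℓ 5 - ℓ 4 - ℓ 3))) := by
  rw [setOf_hexagon_diagonal_eq_Icc hE ℓ hℓ h02 h12 h35 h45]
  apply isLeast_Icc
  refine max_le ?_ (max_le ?_ ?_) <;> apply le_min <;> linarith [hℓ 0, hℓ 1, hℓ 2, hℓ 3, hℓ 4, hℓ 5]

end NormedSpace

/-- The minimal value of the diagonal `|A₀A₃|` on the configuration space of a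
hexagon with ordered side lengths is `max 0 (max (ℓ 2 - ℓ 1 - ℓ 0) (ℓ 5 - ℓ 4 - ℓ 3))`. -/
theorem hexagon_diagonal_min (ℓ : Fin 6 → ℝ) (hpos : ∀ i, 0 < ℓ i)
    (h01 : ℓ 0 ≤ ℓ 1) (h12 : ℓ 1 ≤ ℓ 2) (h23 : ℓ 2 ≤ ℓ 3)
    (h34 : ℓ 3 ≤ ℓ 4) (h45 : ℓ 4 ≤ ℓ 5)
    (hne : ℓ 5 ≤ ℓ 0 + ℓ 1 + ℓ 2 + ℓ 3 + ℓ 4) :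
    IsLeast {d : ℝ | ∃ A : Fin 6 → ℂ,
        IsHexagonRealization ℓ A ∧ dist (A 0) (A 3) = d}
      (max 0 (max (ℓ 2 - ℓ 1 - ℓ 0) (ℓ 5 - ℓ 4 - ℓ 3))) :=
  hexagon_diagonal_min_general (by simp) ℓ (fun i => (hpos i).le) (h01.trans h12) h12
    (h34.trans h45) h45 (by linarith [hpos 0, hpos 1, hpos 4, hpos 5]) hne
end

section
/- (Reachable distances of a planar polygonal chain.) Let m ≥ 1 be an integer, c : Fin m → ℝ with c i > 0 for all i, and d ∈ ℝ. Then there exists a chain A : Fin (m+1) → ℂ with A 0 = 0, dist (A i.castSucc) (A i.succ) = c i for all i : Fin m, and dist (A 0) (A (Fin.last m)) = d, if and only if 0 ≤ d, 2 · (max over i of c i) − Σ_i c i ≤ d, and d ≤ Σ_i c i. -/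
/-!
If the last bar has length `a`, its initial vertex must lie at distance `a` from the endpoint `q`,
and spheres about `p` and `q` meet as soon as their radii and `dist p q` satisfy the three triangle
inequalities: spheres are connected in dimension at least two, so the distance to `q` takes on
`sphere p r` every value between those at the two points of the line `pq`. Taking the radius about
`p` as large as the triangle inequality and the total length `S` of the other bars allow, that is
`min S (dist p q + a)`, reduces reachability to a chain with one bar fewer.
-/

theorem mul_sup'_sub_le_iff {ι 𝕜 : Type*} [Field 𝕜] [LinearOrder 𝕜] [IsStrictOrderedRing 𝕜]
    {s : Finset ι} (hs : s.Nonempty) {f : ι → 𝕜} {a : 𝕜} (ha : 0 < a) {b d : 𝕜} :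
    a * s.sup' hs f - b ≤ d ↔ ∀ i ∈ s, a * f i - b ≤ d := by
  simp only [sub_le_iff_le_add, ← le_div_iff₀' ha, Finset.sup'_le_iff]

/-- A polygonal chain with bar lengths `c` in a metric space, encoded by its vertices
`A 0, …, A m`: bar `i` joins `A i.castSucc` to `A i.succ`. -/
def IsPolygonalChain {X : Type*} [PseudoMetricSpace X] {m : ℕ} (c : Fin m → ℝ)
    (A : Fin (m + 1) → X) : Prop :=
  ∀ i : Fin m, dist (A i.castSucc) (A i.succ) = c i

namespace IsPolygonalChain

variable {X : Type*} [PseudoMetricSpace X]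

theorem iff_init {m : ℕ} {c : Fin (m + 1) → ℝ} {A : Fin (m + 2) → X} :
    IsPolygonalChain c A ↔ IsPolygonalChain (Fin.init c) (Fin.init A) ∧
      dist (A (Fin.last m).castSucc) (A (Fin.last (m + 1))) = c (Fin.last m) :=
  Fin.forall_fin_succ'

theorem dist_le_sum {m : ℕ} {c : Fin m → ℝ} {A : Fin (m + 1) → X} (hA : IsPolygonalChain c A) :
    dist (A 0) (A (Fin.last m)) ≤ ∑ i, c i := by
  induction m with
  | zero => simp
  | succ m ih =>
    obtain ⟨hinit, hlast⟩ := iff_init.1 hA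
    calc dist (A 0) (A (Fin.last (m + 1)))
        ≤ dist (A 0) (A (Fin.last m).castSucc) +
            dist (A (Fin.last m).castSucc) (A (Fin.last (m + 1))) := dist_triangle _ _ _
      _ ≤ ∑ i, Fin.init c i + c (Fin.last m) := add_le_add (ih hinit) hlast.le
      _ = ∑ i, c i := (Fin.sum_univ_castSucc c).symm

theorem two_mul_sub_sum_le_dist {m : ℕ} {c : Fin m → ℝ} {A : Fin (m + 1) → X}
    (hA : IsPolygonalChain c A) (i : Fin m) :
    2 * c i - ∑ j, c j ≤ dist (A 0) (A (Fin.last m)) := by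
  induction m with
  | zero => exact i.elim0
  | succ m ih =>
    obtain ⟨hinit, hlast⟩ := iff_init.1 hA
    have hsum : ∑ j, c j = ∑ j, Fin.init c j + c (Fin.last m) := Fin.sum_univ_castSucc c
    cases i using Fin.lastCases with
    | last =>
      have hdist : dist (A 0) (A (Fin.last m).castSucc) ≤ ∑ j, Fin.init c j := hinit.dist_le_sum
      have htri := dist_triangle_left (A (Fin.last m).castSucc) (A (Fin.last (m + 1))) (A 0)
      linarith
    | cast j =>
      have hdist : 2 * c j.castSucc - ∑ k, Fin.init c k ≤ dist (A 0) (A (Fin.last m).castSucc) :=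
        ih hinit j
      have htri := dist_triangle_right (A 0) (A (Fin.last m).castSucc) (A (Fin.last (m + 1)))
      linarith

end IsPolygonalChain

section NormedSpace

variable {E : Type*} [NormedAddCommGroup E] [NormedSpace ℝ E]

theorem exists_norm_eq_one_and_eq_add_dist_smul [Nontrivial E] (p q : E) :
    ∃ u : E, ‖u‖ = 1 ∧ q = p + dist p q • u := by
  obtain rfl | hpq := eq_or_ne p q
  · obtain ⟨u, hu⟩ := exists_norm_eq E zero_le_one
    exact ⟨u, hu, by simp⟩
  · have hsub : q - p ≠ 0 := sub_ne_zero.2 hpq.symm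
    refine ⟨‖q - p‖⁻¹ • (q - p), norm_smul_inv_norm (𝕜 := ℝ) hsub, ?_⟩
    rw [dist_eq_norm', smul_inv_smul₀ (norm_ne_zero_iff.2 hsub), add_sub_cancel]

theorem dist_add_smul_add_smul (p u : E) (s t : ℝ) :
    dist (p + s • u) (p + t • u) = |s - t| * ‖u‖ := by
  rw [dist_add_left, dist_eq_norm, ← sub_smul, norm_smul, Real.norm_eq_abs]

theorem exists_dist_eq_and_dist_eq_s10 (hE : 1 < Module.rank ℝ E) {p q : E} {r s : ℝ}
    (hpq : dist p q ≤ r + s) (hr : r ≤ dist p q + s) (hs : s ≤ dist p q + r) :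
    ∃ w, dist p w = r ∧ dist w q = s := by
  have : Nontrivial E := rank_pos_iff_nontrivial.1 (zero_lt_one.trans hE)
  obtain ⟨u, hu, hq⟩ := exists_norm_eq_one_and_eq_add_dist_smul p q
  have hr₀ : 0 ≤ r := by linarith
  have hmem (t : ℝ) (ht : |t| = r) : p + t • u ∈ Metric.sphere p r := by
    simp [norm_smul, hu, ht]
  have hdist (t : ℝ) : dist (p + t • u) q = |t - dist p q| := by
    calc dist (p + t • u) q = dist (p + t • u) (p + dist p q • u) := congrArg _ hq
      _ = |t - dist p q| := by rw [dist_add_smul_add_smul, hu, mul_one]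
  have hnear : dist (p + r • u) q ≤ s := by
    rw [hdist, abs_le]
    constructor <;> linarith
  have hfar : s ≤ dist (p + (-r) • u) q := by
    rw [hdist, abs_of_nonpos (by linarith [dist_nonneg (x := p) (y := q)])]
    linarith
  obtain ⟨w, hwp, hwq⟩ := (isPreconnected_sphere hE p r).intermediate_value
    (hmem r (abs_of_nonneg hr₀)) (hmem (-r) (by rw [abs_neg, abs_of_nonneg hr₀]))
    (f := fun w ↦ dist w q) (by fun_prop) ⟨hnear, hfar⟩
  exact ⟨w, Metric.mem_sphere'.1 hwp, hwq⟩

theorem exists_isPolygonalChain (hE : 1 < Module.rank ℝ E) {m : ℕ} {c : Fin m → ℝ}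
    (hc : ∀ i, 0 ≤ c i) {p q : E} (hle : dist p q ≤ ∑ i, c i)
    (hge : ∀ i, 2 * c i - ∑ j, c j ≤ dist p q) :
    ∃ A : Fin (m + 1) → E, A 0 = p ∧ IsPolygonalChain c A ∧ A (Fin.last m) = q := by
  induction m generalizing q with
  | zero =>
    have hpq : p = q := by simpa using hle
    exact ⟨fun _ ↦ p, rfl, fun i ↦ i.elim0, hpq⟩
  | succ m ih =>
    have hc' (i : Fin m) : 0 ≤ Fin.init c i := hc i.castSucc
    set S := ∑ i, Fin.init c i
    set a := c (Fin.last m)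
    have ha : 0 ≤ a := hc (Fin.last m)
    have hsum : ∑ i, c i = S + a := Fin.sum_univ_castSucc c
    rw [hsum] at hle hge
    have halast : 2 * a - (S + a) ≤ dist p q := hge (Fin.last m)
    have hD : 0 ≤ dist p q := dist_nonneg
    obtain ⟨w, hpw, hwq⟩ : ∃ w, dist p w = min S (dist p q + a) ∧ dist w q = a := by
      apply exists_dist_eq_and_dist_eq_s10 hE
      · rw [← sub_le_iff_le_add]
        exact le_min (by linarith) (by linarith)
      · exact min_le_right _ _
      · rw [← sub_le_iff_le_add']
        exact le_min (by linarith) (by linarith)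
    have hwge (i : Fin m) : 2 * Fin.init c i - S ≤ dist p w := by
      have hiS : Fin.init c i ≤ S := Finset.single_le_sum (fun j _ ↦ hc' j) (Finset.mem_univ i)
      have hi : 2 * Fin.init c i - (S + a) ≤ dist p q := hge i.castSucc
      rw [hpw]
      exact le_min (by linarith) (by linarith)
    obtain ⟨A, hA₀, hA, hAw⟩ := ih hc' (hpw.trans_le (min_le_left _ _)) hwge
    refine ⟨Fin.snoc A q, ?_, IsPolygonalChain.iff_init.2 ⟨?_, ?_⟩, Fin.snoc_last _ _⟩
    · rw [← Fin.castSucc_zero, Fin.snoc_castSucc, hA₀]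
    · rwa [Fin.init_snoc]
    · rw [Fin.snoc_castSucc, Fin.snoc_last, hAw, hwq]

theorem chain_reachable_distances_general (hE : 1 < Module.rank ℝ E) {m : ℕ} {c : Fin m → ℝ}
    (hc : ∀ i, 0 ≤ c i) (p : E) (d : ℝ) :
    (∃ A : Fin (m + 1) → E, A 0 = p ∧ IsPolygonalChain c A ∧ dist (A 0) (A (Fin.last m)) = d) ↔
      0 ≤ d ∧ (∀ i, 2 * c i - ∑ j, c j ≤ d) ∧ d ≤ ∑ i, c i := by
  constructor
  · rintro ⟨A, -, hA, rfl⟩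
    exact ⟨dist_nonneg, hA.two_mul_sub_sum_le_dist, hA.dist_le_sum⟩
  · rintro ⟨hd, hge, hle⟩
    have : Nontrivial E := rank_pos_iff_nontrivial.1 (zero_lt_one.trans hE)
    obtain ⟨v, hv⟩ := exists_norm_eq E hd
    have hpq : dist p (p + v) = d := by rw [dist_self_add_right, hv]
    rw [← hpq] at hge hle
    obtain ⟨A, hA₀, hA, hAq⟩ := exists_isPolygonalChain hE hc hle hge
    exact ⟨A, hA₀, hA, by rw [hA₀, hAq, hpq]⟩

end NormedSpace

/-- Reachable distances of a planar polygonal chain: a chain of `m` bars with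
lengths `c` starting at the origin can end at distance `d` from its start
if and only if `0 ≤ d`, `2 · max c − ∑ c ≤ d` and `d ≤ ∑ c`. -/
theorem chain_reachable_distances (m : ℕ) (hm : 1 ≤ m)
    (c : Fin m → ℝ) (hc : ∀ i, 0 < c i) (d : ℝ) :
    (∃ A : Fin (m + 1) → ℂ, A 0 = 0 ∧
        (∀ i : Fin m, dist (A i.castSucc) (A i.succ) = c i) ∧
        dist (A 0) (A (Fin.last m)) = d) ↔
      0 ≤ d ∧
      2 * (Finset.univ.sup' ⟨⟨0, hm⟩, Finset.mem_univ _⟩ c) - ∑ i, c i ≤ d ∧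
      d ≤ ∑ i, c i := by
  have hrank : 1 < Module.rank ℝ ℂ := Complex.rank_real_complex ▸ Cardinal.one_lt_two
  refine (chain_reachable_distances_general hrank (fun i ↦ (hc i).le) 0 d).trans
    (and_congr_right' (and_congr_left' (Iff.trans ?_ (mul_sup'_sub_le_iff _ two_pos).symm)))
  simp only [Finset.mem_univ, forall_const]
end

section
/- (Regularity of the joint length map for the snake linkage.) Let k ≥ 1, let E = EuclideanSpace ℝ (Fin 2) be the Euclidean plane, and define the joint half-squared-length map μ : (Fin (k+1) → E) → (Fin k → ℝ) by μ(A) i = ‖A i.succ − A i.castSucc‖² / 2. If A : Fin (k+1) → E satisfies A i.castSucc ≠ A i.succ for every i : Fin k, then the Fréchet derivative fderiv ℝ μ A : (Fin (k+1) → E) →L (Fin k → ℝ) is surjective. (Consequently, every positive tuple of lengths is a regular value of μ, consistent with the dimension formula dim M_L = 2n − q.) -/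
noncomputable section

/-- The joint half-squared-length map of the snake linkage with vertices
`A 0, …, A k` in the Euclidean plane. -/
def snakeJointLengthMap (k : ℕ) :
    (Fin (k + 1) → EuclideanSpace ℝ (Fin 2)) → (Fin k → ℝ) :=
  fun A i => ‖A i.succ - A i.castSucc‖ ^ 2 / 2

/-!
The map factors through the bar vectors, which depend linearly on the placement, followed by half
the squared norm of each bar vector separately. Since a path has no cycles, the bar vectors can be
prescribed independently, so the linear factor is surjective; and the derivative of `‖v‖² / 2` is
the functional `⟪v, ·⟫`, which is nonzero, hence onto `ℝ`, as soon as `v ≠ 0`.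
-/

theorem hasFDerivAt_piMap {𝕜 ι : Type*} [NontriviallyNormedField 𝕜] [Finite ι]
    {E F : ι → Type*} [∀ i, NormedAddCommGroup (E i)] [∀ i, NormedSpace 𝕜 (E i)]
    [∀ i, NormedAddCommGroup (F i)] [∀ i, NormedSpace 𝕜 (F i)] {f : ∀ i, E i → F i}
    {f' : ∀ i, E i →L[𝕜] F i} {x : ∀ i, E i} (hf : ∀ i, HasFDerivAt (f i) (f' i) (x i)) :
    HasFDerivAt (Pi.map f) (ContinuousLinearMap.piMap f') x := by
  have := Fintype.ofFinite ι
  refine hasFDerivAt_pi.mpr fun i => ?_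
  exact (hf i).comp (f := fun y : ∀ i, E i => y i) x (hasFDerivAt_apply i x)

theorem hasFDerivAt_norm_sq_div_two {F : Type*} [NormedAddCommGroup F] [InnerProductSpace ℝ F]
    (v : F) : HasFDerivAt (fun w : F => ‖w‖ ^ 2 / 2) (innerSL ℝ v) v := by
  have h := (hasStrictFDerivAt_norm_sq v).hasFDerivAt.mul_const (2⁻¹ : ℝ)
  refine (h.congr_fderiv ?_).congr_of_eventuallyEq (.of_forall fun w => div_eq_mul_inv _ _)
  ext w
  simp

theorem innerSL_surjective (𝕜 : Type*) {F : Type*} [RCLike 𝕜] [NormedAddCommGroup F]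
    [InnerProductSpace 𝕜 F] {v : F} (hv : v ≠ 0) : Function.Surjective (innerSL 𝕜 v) := by
  have h_self : innerSL 𝕜 v v ≠ 0 := inner_self_ne_zero.mpr hv
  exact (innerSL 𝕜 v).toLinearMap.surjective fun h => h_self (DFunLike.congr_fun h v)

section BarVectors

variable (R : Type*) [Ring R] (M : Type*) [AddCommGroup M] [Module R M]
  [TopologicalSpace M] [IsTopologicalAddGroup M] (k : ℕ)

/-- The bar vectors `A (i + 1) - A i` of a snake linkage with vertices `A 0, …, A k`, as a
continuous linear function of the placement `A`. -/
def barVectors : (Fin (k + 1) → M) →L[R] (Fin k → M) :=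
  ContinuousLinearMap.pi fun i => .proj (R := R) (φ := fun _ => M) i.succ - .proj i.castSucc

variable {M k}

theorem barVectors_apply (A : Fin (k + 1) → M) (i : Fin k) :
    barVectors R M k A i = A i.succ - A i.castSucc :=
  rfl

theorem barVectors_partialSum (e : Fin k → M) : barVectors R M k (Fin.partialSum e) = e := by
  ext i
  rw [barVectors_apply, Fin.partialSum_succ, add_sub_cancel_left]

theorem barVectors_surjective : Function.Surjective (barVectors R M k) :=
  fun e => ⟨Fin.partialSum e, barVectors_partialSum R e⟩

end BarVectors

section Regularity

variable {F : Type*} [NormedAddCommGroup F] [InnerProductSpace ℝ F] {k : ℕ}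

theorem hasFDerivAt_norm_sq_barVectors_div_two (A : Fin (k + 1) → F) :
    HasFDerivAt (fun (B : Fin (k + 1) → F) (i : Fin k) => ‖B i.succ - B i.castSucc‖ ^ 2 / 2)
      ((ContinuousLinearMap.piMap fun i => innerSL ℝ (barVectors ℝ F k A i)) ∘L
        barVectors ℝ F k) A :=
  (hasFDerivAt_piMap fun i => hasFDerivAt_norm_sq_div_two (barVectors ℝ F k A i)).comp A
    (barVectors ℝ F k).hasFDerivAt

theorem snake_joint_length_map_regular_general (A : Fin (k + 1) → F)
    (hA : ∀ i : Fin k, A i.castSucc ≠ A i.succ) :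
    Function.Surjective (fderiv ℝ
      (fun (B : Fin (k + 1) → F) (i : Fin k) => ‖B i.succ - B i.castSucc‖ ^ 2 / 2) A) := by
  have h_bar_ne (i : Fin k) : barVectors ℝ F k A i ≠ 0 := sub_ne_zero.mpr (hA i).symm
  have h_inner := Function.Surjective.piMap fun i => innerSL_surjective ℝ (h_bar_ne i)
  rw [(hasFDerivAt_norm_sq_barVectors_div_two A).fderiv]
  exact h_inner.comp (barVectors_surjective ℝ)

end Regularity

/-- Regularity of the joint length map of the snake linkage: at any placement
with no degenerate (zero-length) bar, the derivative of the joint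
half-squared-length map is surjective; hence every positive tuple of lengths
is a regular value. -/
theorem snake_joint_length_map_regular (k : ℕ) (hk : 1 ≤ k)
    (A : Fin (k + 1) → EuclideanSpace ℝ (Fin 2))
    (hA : ∀ i : Fin k, A i.castSucc ≠ A i.succ) :
    Function.Surjective (fderiv ℝ (snakeJointLengthMap k) A) :=
  snake_joint_length_map_regular_general A hA
end
end

section
/- (Regularity of the joint length map for the 4-bar mechanism.) Let E = EuclideanSpace ℝ (Fin 2) be the Euclidean plane, fix A, D ∈ E, and define ν : E × E → (Fin 3 → ℝ) by ν(B, C) = (‖B − A‖²/2, ‖C − B‖²/2, ‖D − C‖²/2). Suppose B ≠ A, C ≠ B, D ≠ C, and it is not the case that both {A, B, C} and {B, C, D} are collinear (Collinear ℝ). Then the Fréchet derivative fderiv ℝ ν (B, C) : E × E →L (Fin 3 → ℝ) is surjective. (Hence for generic bar lengths the configuration space of the 4-bar mechanism with fixed vertices A, D is a regular level set, i.e., a one-dimensional manifold, making the 4-bar mechanism a curve-drawing linkage.) -/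
noncomputable section

/-- The joint half-squared-length map of the 4-bar mechanism with fixed base
points `A` and `D`: it records the half squared lengths of the bars
`AB`, `BC`, `CD` as a function of the placement `(B, C)` of the movable
vertices. -/
def fourBarJointLengthMap (A D : EuclideanSpace ℝ (Fin 2)) :
    EuclideanSpace ℝ (Fin 2) × EuclideanSpace ℝ (Fin 2) → (Fin 3 → ℝ) :=
  fun p => ![‖p.1 - A‖ ^ 2 / 2, ‖p.2 - p.1‖ ^ 2 / 2, ‖D - p.2‖ ^ 2 / 2]

/-!
The joint length map fails to be submersive exactly when some nonzero weights `c` make the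
combination `c 0 * ℓ₀ + c 1 * ℓ₁ + c 2 * ℓ₂` of the half squared lengths critical at `(B, C)`. This
is a static equilibrium: the forces at the two movable joints balance, that is
`c 0 • (B - A) = c 1 • (C - B) = c 2 • (D - C)`, so one and the same force is transmitted along the
whole chain of bars. If that force vanishes, nondegeneracy of the bars kills all the weights;
otherwise it is parallel to every bar, which makes both triples collinear.
-/

section LinearAlgebra

theorem surjective_iff_forall_dotProduct_eq_zero {K V ι : Type*} [Field K] [AddCommGroup V]
    [Module K V] [Fintype ι] (f : V →ₗ[K] ι → K) :
    Function.Surjective f ↔ ∀ c : ι → K, (∀ x, c ⬝ᵥ f x = 0) → c = 0 := by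
  classical
  rw [← LinearMap.dualMap_injective_iff,
    ← (dotProductEquiv K ι).toEquiv.injective_comp f.dualMap]
  exact (injective_iff_map_eq_zero (f.dualMap ∘ₗ (dotProductEquiv K ι).toLinearMap)).trans
    (forall_congr' fun c => imp_congr_left LinearMap.ext_iff)

theorem collinear_of_smul_vsub_eq_smul_vsub {K V P : Type*} [DivisionRing K] [AddCommGroup V]
    [Module K V] [AddTorsor V P] {p q r : P} {a b : K} (hb : b ≠ 0)
    (h : a • (q -ᵥ p) = b • (r -ᵥ q)) : Collinear K {p, q, r} := by
  have hr : r ∈ line[K, p, q] := by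
    rw [← vsub_vadd r q, ← inv_smul_smul₀ hb (r -ᵥ q), ← h, smul_smul]
    exact AffineSubspace.vadd_mem_of_mem_direction
      (Submodule.smul_mem _ _ (AffineSubspace.vsub_mem_direction
        (right_mem_affineSpan_pair K p q) (left_mem_affineSpan_pair K p q)))
      (right_mem_affineSpan_pair K p q)
  exact (collinear_insert_of_mem_affineSpan_pair hr).subset (by grind)

end LinearAlgebra

section InnerProductSpace

variable {E : Type*} [NormedAddCommGroup E] [InnerProductSpace ℝ E]

theorem hasFDerivAt_norm_sq_div_two_s12 {F : Type*} [NormedAddCommGroup F] [NormedSpace ℝ F]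
    {f : F → E} {f' : F →L[ℝ] E} {x : F} (hf : HasFDerivAt f f' x) :
    HasFDerivAt (fun y => ‖f y‖ ^ 2 / 2) ((innerSL ℝ (f x)).comp f') x := by
  have h := hf.norm_sq.mul_const (2⁻¹ : ℝ)
  rw [← Nat.cast_smul_eq_nsmul ℝ, smul_smul] at h
  simpa [div_eq_mul_inv] using h

/-- The joint half-squared-length map of a 4-bar mechanism in an arbitrary real inner product
space; for the Euclidean plane it is `fourBarJointLengthMap`. -/
def fourBarHalfSqLengths (A D : E) : E × E → Fin 3 → ℝ :=
  fun p => ![‖p.1 - A‖ ^ 2 / 2, ‖p.2 - p.1‖ ^ 2 / 2, ‖D - p.2‖ ^ 2 / 2]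

theorem fderiv_fourBarHalfSqLengths_apply (A D B C x y : E) :
    fderiv ℝ (fourBarHalfSqLengths A D) (B, C) (x, y) =
      ![inner ℝ (B - A) x, inner ℝ (C - B) (y - x), -inner ℝ (D - C) y] := by
  let pB := ContinuousLinearMap.fst ℝ E E
  let pC := ContinuousLinearMap.snd ℝ E E
  have hB : HasFDerivAt (fun p : E × E => p.1) pB (B, C) := hasFDerivAt_fst
  have hC : HasFDerivAt (fun p : E × E => p.2) pC (B, C) := hasFDerivAt_snd
  have hν : HasFDerivAt (fourBarHalfSqLengths A D)
      (ContinuousLinearMap.pi ![(innerSL ℝ (B - A)).comp pB, (innerSL ℝ (C - B)).comp (pC - pB),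
        (innerSL ℝ (D - C)).comp (-pC)]) (B, C) := by
    rw [hasFDerivAt_pi']
    intro i
    fin_cases i
    · exact hasFDerivAt_norm_sq_div_two_s12 (hB.sub_const A)
    · exact hasFDerivAt_norm_sq_div_two_s12 (hC.sub hB)
    · exact hasFDerivAt_norm_sq_div_two_s12 (hC.const_sub D)
  rw [hν.fderiv]
  ext i
  fin_cases i <;> simp [pB, pC, inner_sub_left, inner_sub_right]

/-- Weights `c` on the bars of the chain `A`, `B`, `C`, `D` form a self-stress when every
movable joint is in equilibrium: the forces that the two bars at `B` exert on it cancel, and so do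
those at `C`. As in rigidity theory, a weight is a force per unit length of its bar. -/
def IsFourBarSelfStress (A B C D : E) (c : Fin 3 → ℝ) : Prop :=
  c 0 • (B - A) = c 1 • (C - B) ∧ c 1 • (C - B) = c 2 • (D - C)

theorem isFourBarSelfStress_iff_dotProduct_fderiv_eq_zero {A B C D : E} {c : Fin 3 → ℝ} :
    IsFourBarSelfStress A B C D c ↔
      ∀ q, c ⬝ᵥ fderiv ℝ (fourBarHalfSqLengths A D) (B, C) q = 0 := by
  have virtual_work (x y : E) :
      c ⬝ᵥ fderiv ℝ (fourBarHalfSqLengths A D) (B, C) (x, y) =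
        inner ℝ (c 0 • (B - A) - c 1 • (C - B)) x +
          inner ℝ (c 1 • (C - B) - c 2 • (D - C)) y := by
    simp only [fderiv_fourBarHalfSqLengths_apply, Matrix.vec3_dotProduct, Matrix.cons_val,
      inner_sub_left (𝕜 := ℝ) (_ • _), inner_sub_right, real_inner_smul_left]
    ring
  simp only [Prod.forall, virtual_work]
  constructor
  · rintro ⟨hB, hC⟩ x y
    simp [hB, hC]
  · intro h
    refine ⟨sub_eq_zero.1 ?_, sub_eq_zero.1 ?_⟩
    · exact ext_inner_right ℝ fun x => by simpa using h x 0
    · exact ext_inner_right ℝ fun y => by simpa using h 0 y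

theorem surjective_fderiv_fourBarHalfSqLengths_iff {A B C D : E} :
    Function.Surjective (fderiv ℝ (fourBarHalfSqLengths A D) (B, C)) ↔
      ∀ c, IsFourBarSelfStress A B C D c → c = 0 := by
  simp only [isFourBarSelfStress_iff_dotProduct_fderiv_eq_zero]
  exact surjective_iff_forall_dotProduct_eq_zero
    (fderiv ℝ (fourBarHalfSqLengths A D) (B, C)).toLinearMap

namespace IsFourBarSelfStress

variable {A B C D : E} {c : Fin 3 → ℝ}

theorem eq_zero_of_apply_one_eq_zero (hc : IsFourBarSelfStress A B C D c) (hBA : B ≠ A)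
    (hDC : D ≠ C) (hc₁ : c 1 = 0) : c = 0 := by
  obtain ⟨hB, hC⟩ := hc
  have hc₀ : c 0 = 0 := by simpa [hc₁, sub_eq_zero, hBA] using hB
  have hc₂ : c 2 = 0 := by simpa [hc₁, sub_eq_zero, hDC] using hC.symm
  ext i
  fin_cases i <;> assumption

theorem collinear (hc : IsFourBarSelfStress A B C D c) (hCB : C ≠ B) (hc₁ : c 1 ≠ 0) :
    Collinear ℝ {A, B, C} ∧ Collinear ℝ {B, C, D} := by
  obtain ⟨hB, hC⟩ := hc
  have force_ne_zero : c 1 • (C - B) ≠ 0 := smul_ne_zero hc₁ (sub_ne_zero.2 hCB)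
  have hc₂ : c 2 ≠ 0 := left_ne_zero_of_smul (hC ▸ force_ne_zero)
  exact ⟨collinear_of_smul_vsub_eq_smul_vsub hc₁ hB, collinear_of_smul_vsub_eq_smul_vsub hc₂ hC⟩

end IsFourBarSelfStress

theorem fourBar_joint_length_map_regular_general {A B C D : E} (hBA : B ≠ A) (hCB : C ≠ B)
    (hDC : D ≠ C) (hcol : ¬(Collinear ℝ {A, B, C} ∧ Collinear ℝ {B, C, D})) :
    Function.Surjective (fderiv ℝ (fourBarHalfSqLengths A D) (B, C)) := by
  refine surjective_fderiv_fourBarHalfSqLengths_iff.2 fun c hc => ?_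
  have hc₁ : c 1 = 0 := by_contra fun hc₁ => hcol (hc.collinear hCB hc₁)
  exact hc.eq_zero_of_apply_one_eq_zero hBA hDC hc₁

end InnerProductSpace

/-- Regularity of the joint length map of the 4-bar mechanism: if no bar is
degenerate and it is not the case that both triples `{A, B, C}` and
`{B, C, D}` are collinear, then the derivative of the joint
half-squared-length map at `(B, C)` is surjective. -/
theorem fourBar_joint_length_map_regular
    (A D B C : EuclideanSpace ℝ (Fin 2))
    (hBA : B ≠ A) (hCB : C ≠ B) (hDC : D ≠ C)
    (hcol : ¬ (Collinear ℝ ({A, B, C} : Set (EuclideanSpace ℝ (Fin 2))) ∧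
               Collinear ℝ ({B, C, D} : Set (EuclideanSpace ℝ (Fin 2))))) :
    Function.Surjective (fderiv ℝ (fourBarJointLengthMap A D) (B, C)) :=
  fourBar_joint_length_map_regular_general hBA hCB hDC hcol
end
end

section
/- (Existence criterion for planar polygon realizations.) Let n ≥ 3 and ℓ : Fin n → ℝ with ℓ i > 0 for all i. Then there exists A : Fin n → ℂ with dist (A i) (A (i+1)) = ℓ i for all i : Fin n (index i+1 taken modulo n) if and only if 2 · (max over i of ℓ i) ≤ Σ_i ℓ i; that is, the configuration space of the planar n-gon linkage with side lengths ℓ is nonempty if and only if every side length is at most the sum of all the others. -/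
/-!
The edge vectors of a closed polygon are exactly the families of vectors with sum zero, so the
question is which lengths are realized by vectors with a prescribed sum `w`. Induct on the number
of vectors: to split off a vector `z` of length `a`, let `z` run over the sphere of radius `a`.
The sphere is connected, so `‖w - z‖` takes every value between `|‖w‖ - a|` and `‖w‖ + a`; the
largest such value not exceeding the sum of the remaining lengths leaves a solvable problem.
-/

open Finset

section Closing

variable {G : Type*} [AddCommGroup G]

lemma exists_cyclic_sub_eq_iff_sum_eq_zero {n : ℕ} [NeZero n] (v : Fin n → G) :
    (∃ A : Fin n → G, ∀ i, A (i + 1) - A i = v i) ↔ ∑ i, v i = 0 := by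
  constructor
  · rintro ⟨A, hA⟩
    simp only [← hA, sum_sub_distrib, sub_eq_zero]
    exact Equiv.sum_comp (Equiv.addRight 1) A
  · intro hv
    obtain ⟨m, rfl⟩ := Nat.exists_eq_add_one_of_ne_zero (NeZero.ne n)
    refine ⟨fun i ↦ Fin.partialSum v i.castSucc, fun i ↦ ?_⟩
    suffices Fin.partialSum v (i + 1).castSucc = Fin.partialSum v i.succ by
      simp only [this, Fin.partialSum_succ, add_sub_cancel_left]
    cases i using Fin.lastCases with
    | last =>
      have partialSum_last : Fin.partialSum v (Fin.last m).succ = ∑ i, v i := by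
        rw [Fin.partialSum, List.take_of_length_le (by simp), List.sum_ofFn]
      rw [partialSum_last, hv, Fin.last_add_one, Fin.castSucc_zero, Fin.partialSum_zero]
    | cast j => rw [Fin.coeSucc_eq_succ, Fin.succ_castSucc]

end Closing

section Seminormed

variable {ι E : Type*} [SeminormedAddCommGroup E]

lemma two_mul_norm_le_norm_sum_add_sum_norm {s : Finset ι} (v : ι → E) {i : ι} (hi : i ∈ s) :
    2 * ‖v i‖ ≤ ‖∑ j ∈ s, v j‖ + ∑ j ∈ s, ‖v j‖ := by
  classical
  have hv : v i = ∑ j ∈ s, v j - ∑ j ∈ s.erase i, v j := by rw [← add_sum_erase s v hi]; abel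
  have : ‖v i‖ ≤ ‖∑ j ∈ s, v j‖ + ∑ j ∈ s.erase i, ‖v j‖ := calc
    ‖v i‖ = ‖∑ j ∈ s, v j - ∑ j ∈ s.erase i, v j‖ := congrArg norm hv
    _ ≤ ‖∑ j ∈ s, v j‖ + ‖∑ j ∈ s.erase i, v j‖ := norm_sub_le _ _
    _ ≤ _ := by gcongr; exact norm_sum_le _ _
  linarith [add_sum_erase s (fun j ↦ ‖v j‖) hi]

end Seminormed

section Normed

variable {E : Type*} [NormedAddCommGroup E] [NormedSpace ℝ E]

lemma exists_sameRay_norm_eq [Nontrivial E] (w : E) {a : ℝ} (ha : 0 ≤ a) :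
    ∃ z : E, SameRay ℝ w z ∧ ‖z‖ = a := by
  obtain rfl | hw := eq_or_ne w 0
  · exact (exists_norm_eq E ha).imp fun z hz ↦ ⟨.zero_left z, hz⟩
  · refine ⟨(a / ‖w‖) • w, .sameRay_nonneg_smul_right w (by positivity), ?_⟩
    rw [norm_smul_of_nonneg (by positivity), div_mul_cancel₀ _ (norm_ne_zero_iff.2 hw)]

lemma exists_norm_eq_norm_sub_eq (hE : 1 < Module.rank ℝ E) {w : E} {a r : ℝ} (ha : 0 ≤ a)
    (hr : r ∈ Set.Icc |‖w‖ - a| (‖w‖ + a)) : ∃ z : E, ‖z‖ = a ∧ ‖w - z‖ = r := by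
  have : Nontrivial E := rank_pos_iff_nontrivial.1 (one_pos.trans hE)
  obtain ⟨z, hwz, rfl⟩ := exists_sameRay_norm_eq w ha
  rw [← hwz.norm_sub, ← hwz.norm_add, ← sub_neg_eq_add] at hr
  obtain ⟨y, hy, hyr⟩ := (isPreconnected_sphere hE (0 : E) ‖z‖).intermediate_value
    (a := z) (b := -z) (f := fun y ↦ ‖w - y‖) (by simp) (by simp) (by fun_prop) hr
  exact ⟨y, mem_sphere_zero_iff_norm.1 hy, hyr⟩

variable {ι : Type*}

lemma exists_norm_eq_sum_eq (hE : 1 < Module.rank ℝ E) {s : Finset ι} {l : ι → ℝ}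
    (hl : ∀ i ∈ s, 0 ≤ l i) {w : E} (hw : ‖w‖ ≤ ∑ i ∈ s, l i)
    (hls : ∀ i ∈ s, 2 * l i ≤ ‖w‖ + ∑ i ∈ s, l i) :
    ∃ v : ι → E, (∀ i ∈ s, ‖v i‖ = l i) ∧ ∑ i ∈ s, v i = w := by
  classical
  induction s using Finset.induction_on generalizing w with
  | empty => exact ⟨0, by simp, (norm_le_zero_iff.1 hw).symm⟩
  | insert a t hat ih =>
    simp only [forall_mem_insert, sum_insert hat] at hl hw hls
    obtain ⟨hla, hlt⟩ := hl
    obtain ⟨hlsa, hlst⟩ := hls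
    have hw₀ : 0 ≤ ‖w‖ := norm_nonneg w
    obtain ⟨z, hz, hwz⟩ : ∃ z : E, ‖z‖ = l a ∧ ‖w - z‖ = min (‖w‖ + l a) (∑ i ∈ t, l i) := by
      refine exists_norm_eq_norm_sub_eq hE hla ⟨le_min ?_ ?_, min_le_left _ _⟩ <;>
        exact abs_le.2 ⟨by linarith, by linarith⟩
    have hlt_wz (i) (hi : i ∈ t) : 2 * l i ≤ ‖w - z‖ + ∑ j ∈ t, l j := by
      have hit : l i ≤ ∑ j ∈ t, l j := single_le_sum hlt hi
      rw [hwz, ← sub_le_iff_le_add]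
      exact le_min (by linarith [hlst i hi]) (by linarith)
    obtain ⟨v, hv, hvsum⟩ := ih hlt (hwz.trans_le (min_le_right _ _)) hlt_wz
    have hupdate (i) (hi : i ∈ t) : Function.update v a z i = v i :=
      Function.update_of_ne (ne_of_mem_of_not_mem hi hat) z v
    refine ⟨Function.update v a z, ?_, ?_⟩
    · rw [forall_mem_insert, Function.update_self]
      exact ⟨hz, fun i hi ↦ by rw [hupdate i hi, hv i hi]⟩
    · rw [sum_insert hat, Function.update_self, sum_congr rfl hupdate, hvsum, add_sub_cancel]

lemma exists_norm_eq_sum_eq_zero_iff [Fintype ι] (hE : 1 < Module.rank ℝ E) {l : ι → ℝ}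
    (hl : ∀ i, 0 ≤ l i) :
    (∃ v : ι → E, (∀ i, ‖v i‖ = l i) ∧ ∑ i, v i = 0) ↔ ∀ i, 2 * l i ≤ ∑ j, l j := by
  constructor
  · rintro ⟨v, hv, hvsum⟩ i
    simpa [hv, hvsum] using two_mul_norm_le_norm_sum_add_sum_norm v (mem_univ i)
  · intro h
    simpa using exists_norm_eq_sum_eq hE (s := univ) (w := (0 : E)) (fun i _ ↦ hl i)
      (by simpa using sum_nonneg fun i _ ↦ hl i) (by simpa using h)

theorem polygon_realization_exists_iff_general (hE : 1 < Module.rank ℝ E) {n : ℕ} [NeZero n]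
    {ℓ : Fin n → ℝ} (hℓ : ∀ i, 0 ≤ ℓ i) :
    (∃ A : Fin n → E, ∀ i, dist (A i) (A (i + 1)) = ℓ i) ↔
      2 * univ.sup' univ_nonempty ℓ ≤ ∑ i, ℓ i := by
  calc (∃ A : Fin n → E, ∀ i, dist (A i) (A (i + 1)) = ℓ i)
      ↔ ∃ v : Fin n → E, (∀ i, ‖v i‖ = ℓ i) ∧ ∃ A : Fin n → E, ∀ i, A (i + 1) - A i = v i := by
        simp only [dist_eq_norm_sub']
        exact ⟨fun ⟨A, hA⟩ ↦ ⟨fun i ↦ A (i + 1) - A i, hA, A, fun _ ↦ rfl⟩,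
          fun ⟨v, hv, A, hA⟩ ↦ ⟨A, fun i ↦ by rw [hA, hv]⟩⟩
    _ ↔ ∃ v : Fin n → E, (∀ i, ‖v i‖ = ℓ i) ∧ ∑ i, v i = 0 := by
        simp only [exists_cyclic_sub_eq_iff_sum_eq_zero]
    _ ↔ ∀ i, 2 * ℓ i ≤ ∑ j, ℓ j := exists_norm_eq_sum_eq_zero_iff hE hℓ
    _ ↔ 2 * univ.sup' univ_nonempty ℓ ≤ ∑ i, ℓ i := by
        simp only [← le_div_iff₀' (zero_lt_two' ℝ), sup'_le_iff, mem_univ, true_imp_iff]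

end Normed

/-- Existence criterion for planar polygon realizations: an `n`-gon with
prescribed positive side lengths `ℓ` exists in the plane `ℂ` if and only if
twice the largest side length is at most the sum of all the side lengths,
i.e., every side is at most the sum of all the others. -/
theorem polygon_realization_exists_iff (n : ℕ) (hn : 3 ≤ n)
    (ℓ : Fin n → ℝ) (hpos : ∀ i, 0 < ℓ i) :
    (∃ A : Fin n → ℂ, ∀ i : Fin n,
        dist (A i) (A ⟨((i : ℕ) + 1) % n, Nat.mod_lt _ (by omega)⟩) = ℓ i) ↔
      2 * (Finset.univ.sup' ⟨⟨0, by omega⟩, Finset.mem_univ _⟩ ℓ) ≤ ∑ i, ℓ i := by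
  have : NeZero n := ⟨by omega⟩
  simpa only [Fin.add_def, Fin.val_one', Nat.add_mod_mod] using
    polygon_realization_exists_iff_general (Complex.rank_real_complex ▸ Nat.one_lt_ofNat)
      fun i ↦ (hpos i).le
end
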